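/- The polynomial P_5 takes only the three values −2, 6 and −3 at its critical points over ℂ. More precisely, the set of critical points (a,b) ∈ ℂ² of P_5 with P_5(a,b) = −2 has exactly 10 elements, the set of critical points with P_5(a,b) = 6 has exactly 2 elements, the set of critical points with P_5(a,b) = −3 has exactly 4 elements, and every critical point has one of these three critical values. -/

import Mathlib

/-!
Write `s = a + b` and `p = a * b`. If `F`, `G` are the partial derivatives of `P5` divided by `5`,
then `F - G = (a - b) (s + 2) (s² - s + 1 - 2p)`, while `F + G` is a polynomial in `s`, `p`. Let `r`
be a root of `r² = r + 1`; the other root is `1 - r`. The three factors of `F - G` give: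

* `a = b`: then `(a² - a - 1)(a² - 3a + 1) = 0`, so `a` is one of `r`, `1 - r` (value `6`) or
  `r + 1`, `2 - r` (value `-2`);
* `s = -2`: then `p² - 7p + 11 = 0`, so `p` is `r + 3` or `4 - r` (value `-2`);
* `2p = s² - s + 1`: then `(s² - s - 1)(s² + s - 1) = 0`, so `(s, p)` is `(r, 1)` or `(1 - r, 1)`
  (value `-2`), or `(-r, 1 + r)` or `(r - 1, 2 - r)` (value `-3`).

Each pair `(s, p)` in the last two cases satisfies `s² ≠ 4p`, hence comes from exactly two points
(`ncard_sumProd`). This gives `2 + 4 + 4 = 10`, `2` and `4` points with values `-2`, `6`, `-3`.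
-/

open MvPolynomial

/-- The degree-5 generalized Chebyshev polynomial `P_5(x_1,x_2)` as a polynomial
in two variables with complex coefficients. -/
noncomputable def P5 : MvPolynomial (Fin 2) ℂ :=
  X 0 ^ 5 + X 1 ^ 5 - 5 * X 0 * X 1 * (X 0 ^ 2 + X 1 ^ 2)
    + 5 * X 0 * X 1 * (X 0 + X 1) + 5 * (X 0 ^ 2 + X 1 ^ 2) - 5 * (X 0 + X 1)

/-- `(a,b) ∈ ℂ²` is a critical point of `P_5` if both formal partial derivatives
of `P_5` vanish at `(a,b)`. -/
def IsCriticalPoint (p : ℂ × ℂ) : Prop :=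
  eval ![p.1, p.2] (pderiv 0 P5) = 0 ∧ eval ![p.1, p.2] (pderiv 1 P5) = 0

/-- The ordered pairs with sum `s` and product `p`. -/
def sumProd (s p : ℂ) : Set (ℂ × ℂ) := {q | q.1 + q.2 = s ∧ q.1 * q.2 = p}

lemma sumProd_eq_pair {s p d : ℂ} (hd : d ^ 2 = s ^ 2 - 4 * p) :
    sumProd s p = {((s + d) / 2, (s - d) / 2), ((s - d) / 2, (s + d) / 2)} := by
  ext ⟨x, y⟩
  simp only [sumProd, Set.mem_ofPred_eq, Set.mem_insert_iff, Set.mem_singleton_iff, Prod.mk.injEq]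
  constructor
  · rintro ⟨h1, h2⟩
    have h : (x - y - d) * (x - y + d) = 0 := by subst h1 h2; linear_combination -hd
    rcases mul_eq_zero.mp h with h | h
    · left; constructor
      · linear_combination (h1 + h) / 2
      · linear_combination (h1 - h) / 2
    · right; constructor
      · linear_combination (h1 + h) / 2
      · linear_combination (h1 - h) / 2
  · rintro (⟨rfl, rfl⟩ | ⟨rfl, rfl⟩) <;>
      exact ⟨by ring, by linear_combination -hd / 4⟩

lemma finite_sumProd (s p : ℂ) : (sumProd s p).Finite := by
  obtain ⟨d, hd⟩ := IsAlgClosed.exists_pow_nat_eq (s ^ 2 - 4 * p) two_pos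
  rw [sumProd_eq_pair hd]
  exact Set.toFinite _

lemma ncard_sumProd {s p : ℂ} (h : s ^ 2 - 4 * p ≠ 0) : (sumProd s p).ncard = 2 := by
  obtain ⟨d, hd⟩ := IsAlgClosed.exists_pow_nat_eq (s ^ 2 - 4 * p) two_pos
  rw [sumProd_eq_pair hd, Set.ncard_pair]
  intro he
  have h1 : (s + d) / 2 = (s - d) / 2 := congrArg Prod.fst he
  have h2 : d = 0 := by linear_combination h1
  apply h
  rw [← hd, h2]
  norm_num

lemma disjoint_sumProd {s p s' p' : ℂ} (h : s = s' → p ≠ p') :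
    Disjoint (sumProd s p) (sumProd s' p') :=
  Set.disjoint_left.mpr fun _ h1 h2 => h (h1.1.symm.trans h2.1) (h1.2.symm.trans h2.2)

lemma eval_P5 (a b : ℂ) : eval ![a, b] P5 =
    a ^ 5 + b ^ 5 - 5 * a * b * (a ^ 2 + b ^ 2) + 5 * a * b * (a + b) + 5 * (a ^ 2 + b ^ 2)
      - 5 * (a + b) := by
  simp [P5]

lemma isCriticalPoint_iff (a b : ℂ) : IsCriticalPoint (a, b) ↔
    a ^ 4 - 3 * a ^ 2 * b - b ^ 3 + 2 * a * b + b ^ 2 + 2 * a - 1 = 0 ∧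
    b ^ 4 - 3 * a * b ^ 2 - a ^ 3 + 2 * a * b + a ^ 2 + 2 * b - 1 = 0 := by
  have h5 : (5 : MvPolynomial (Fin 2) ℂ) = C 5 := (map_ofNat C 5).symm
  have e0 : eval ![a, b] (pderiv 0 P5) =
      5 * (a ^ 4 - 3 * a ^ 2 * b - b ^ 3 + 2 * a * b + b ^ 2 + 2 * a - 1) := by
    simp [P5, h5, pderiv_X]
    ring
  have e1 : eval ![a, b] (pderiv 1 P5) =
      5 * (b ^ 4 - 3 * a * b ^ 2 - a ^ 3 + 2 * a * b + a ^ 2 + 2 * b - 1) := by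
    simp [P5, h5, pderiv_X]
    ring
  simp only [IsCriticalPoint]
  rw [e0, e1]
  simp

/-- The critical points of value `-2`, in terms of a root `r` of `r² = r + 1`. -/
def critNegTwo (r : ℂ) : Set (ℂ × ℂ) :=
  {(r + 1, r + 1), (2 - r, 2 - r)} ∪ sumProd (-2) (r + 3) ∪ sumProd (-2) (4 - r) ∪
    sumProd r 1 ∪ sumProd (1 - r) 1

/-- The critical points of value `6`, in terms of a root `r` of `r² = r + 1`. -/
def critSix (r : ℂ) : Set (ℂ × ℂ) := {(r, r), (1 - r, 1 - r)}

/-- The critical points of value `-3`, in terms of a root `r` of `r² = r + 1`. -/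
def critNegThree (r : ℂ) : Set (ℂ × ℂ) := sumProd (-r) (1 + r) ∪ sumProd (r - 1) (2 - r)

lemma mem_of_isCriticalPoint {r : ℂ} (hr : r ^ 2 = r + 1) {q : ℂ × ℂ} (hq : IsCriticalPoint q) :
    q ∈ critNegTwo r ∨ q ∈ critSix r ∨ q ∈ critNegThree r := by
  obtain ⟨a, b⟩ := q
  obtain ⟨hF, hG⟩ := (isCriticalPoint_iff a b).mp hq
  simp only [critNegTwo, critSix, critNegThree, sumProd, Set.mem_union, Set.mem_insert_iff,
    Set.mem_singleton_iff, Set.mem_ofPred_eq, Prod.mk.injEq]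
  have h : (a - b) * ((a + b + 2) * ((a + b) ^ 2 - (a + b) + 1 - 2 * (a * b))) = 0 := by
    linear_combination hF - hG
  rcases mul_eq_zero.mp h with h | h
  · obtain rfl : a = b := sub_eq_zero.mp h
    have h : ((a - r) * (a - (1 - r))) * ((a - (r + 1)) * (a - (2 - r))) = 0 := by
      grind
    rcases mul_eq_zero.mp h with h | h <;> rcases mul_eq_zero.mp h with h | h <;>
      simp [sub_eq_zero.mp h]
  rcases mul_eq_zero.mp h with h | h
  · have hs : a + b = -2 := by linear_combination h
    obtain rfl : b = -2 - a := by linear_combination hs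
    have h : (a * (-2 - a) - (r + 3)) * (a * (-2 - a) - (4 - r)) = 0 := by
      grind
    rcases mul_eq_zero.mp h with h | h <;> simp [sub_eq_zero.mp h]
  · have h' : ((a + b - r) * (a + b - (1 - r))) * ((a + b - (-r)) * (a + b - (r - 1))) = 0 := by
      grind
    rcases mul_eq_zero.mp h' with h' | h' <;> rcases mul_eq_zero.mp h' with h' | h' <;> grind

lemma critNegTwo_spec {r : ℂ} (hr : r ^ 2 = r + 1) {q : ℂ × ℂ} (hq : q ∈ critNegTwo r) :
    IsCriticalPoint q ∧ eval ![q.1, q.2] P5 = -2 := by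
  obtain ⟨a, b⟩ := q
  rw [isCriticalPoint_iff, eval_P5]
  simp only [critNegTwo, sumProd, Set.mem_union, Set.mem_insert_iff,
    Set.mem_singleton_iff, Set.mem_ofPred_eq, Prod.mk.injEq] at hq
  rcases hq with ((((⟨h1, h2⟩ | ⟨h1, h2⟩) | ⟨h1, h2⟩) | ⟨h1, h2⟩) | ⟨h1, h2⟩) | ⟨h1, h2⟩ <;>
    refine ⟨⟨?_, ?_⟩, ?_⟩ <;> grind

lemma critSix_spec {r : ℂ} (hr : r ^ 2 = r + 1) {q : ℂ × ℂ} (hq : q ∈ critSix r) :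
    IsCriticalPoint q ∧ eval ![q.1, q.2] P5 = 6 := by
  obtain ⟨a, b⟩ := q
  rw [isCriticalPoint_iff, eval_P5]
  simp only [critSix, Set.mem_insert_iff, Set.mem_singleton_iff, Prod.mk.injEq] at hq
  rcases hq with ⟨h1, h2⟩ | ⟨h1, h2⟩ <;> refine ⟨⟨?_, ?_⟩, ?_⟩ <;> grind

lemma critNegThree_spec {r : ℂ} (hr : r ^ 2 = r + 1) {q : ℂ × ℂ} (hq : q ∈ critNegThree r) :
    IsCriticalPoint q ∧ eval ![q.1, q.2] P5 = -3 := by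
  obtain ⟨a, b⟩ := q
  rw [isCriticalPoint_iff, eval_P5]
  simp only [critNegThree, sumProd, Set.mem_union, Set.mem_ofPred_eq] at hq
  rcases hq with ⟨h1, h2⟩ | ⟨h1, h2⟩ <;> refine ⟨⟨?_, ?_⟩, ?_⟩ <;> grind

lemma ncard_critNegTwo {r : ℂ} (hr : r ^ 2 = r + 1) : (critNegTwo r).ncard = 10 := by
  have hpair : ({(r + 1, r + 1), (2 - r, 2 - r)} : Set (ℂ × ℂ)).ncard = 2 :=
    Set.ncard_pair fun h => by
      have := congrArg Prod.fst h
      grind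
  have hdiag : ∀ s p : ℂ, s ^ 2 - 4 * p ≠ 0 →
      Disjoint ({(r + 1, r + 1), (2 - r, 2 - r)} : Set (ℂ × ℂ)) (sumProd s p) := by
    intro s p h
    refine Set.disjoint_left.mpr ?_
    rintro _ (rfl | rfl) ⟨h1, h2⟩ <;> exact h (by rw [← h1, ← h2]; ring)
  have d1 : (-2 : ℂ) ^ 2 - 4 * (r + 3) ≠ 0 := by grind
  have d2 : (-2 : ℂ) ^ 2 - 4 * (4 - r) ≠ 0 := by grind
  have d3 : r ^ 2 - 4 * 1 ≠ 0 := by grind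
  have d4 : (1 - r) ^ 2 - 4 * 1 ≠ 0 := by grind
  have f := finite_sumProd
  have f0 : ({(r + 1, r + 1), (2 - r, 2 - r)} : Set (ℂ × ℂ)).Finite := Set.toFinite _
  have f1 := f0.union (f (-2) (r + 3))
  have f2 := f1.union (f (-2) (4 - r))
  have f3 := f2.union (f r 1)
  rw [critNegTwo, Set.ncard_union_eq _ f3 (f _ _), Set.ncard_union_eq _ f2 (f _ _),
    Set.ncard_union_eq _ f1 (f _ _), Set.ncard_union_eq _ f0 (f _ _), hpair,
    ncard_sumProd d1, ncard_sumProd d2, ncard_sumProd d3, ncard_sumProd d4]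
  · exact hdiag _ _ d1
  · exact (hdiag _ _ d2).union_left (disjoint_sumProd (by grind))
  · exact ((hdiag _ _ d3).union_left (disjoint_sumProd (by grind))).union_left
      (disjoint_sumProd (by grind))
  · exact (((hdiag _ _ d4).union_left (disjoint_sumProd (by grind))).union_left
      (disjoint_sumProd (by grind))).union_left (disjoint_sumProd (by grind))

lemma ncard_critSix {r : ℂ} (hr : r ^ 2 = r + 1) : (critSix r).ncard = 2 :=
  Set.ncard_pair fun h => by
    have := congrArg Prod.fst h
    grind

lemma ncard_critNegThree {r : ℂ} (hr : r ^ 2 = r + 1) : (critNegThree r).ncard = 4 := by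
  rw [critNegThree, Set.ncard_union_eq (disjoint_sumProd (by grind)) (finite_sumProd _ _)
    (finite_sumProd _ _), ncard_sumProd (by grind), ncard_sumProd (by grind)]

/-- `P_5` takes only the three values `-2`, `6`, `-3` at its critical points over `ℂ`:
there are exactly 10 critical points with value `-2`, exactly 2 with value `6`,
and exactly 4 with value `-3`. -/
theorem critical_values_of_P5 :
    {p : ℂ × ℂ | IsCriticalPoint p ∧ eval ![p.1, p.2] P5 = -2}.ncard = 10 ∧
    {p : ℂ × ℂ | IsCriticalPoint p ∧ eval ![p.1, p.2] P5 = 6}.ncard = 2 ∧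
    {p : ℂ × ℂ | IsCriticalPoint p ∧ eval ![p.1, p.2] P5 = -3}.ncard = 4 ∧
    ∀ p : ℂ × ℂ, IsCriticalPoint p → eval ![p.1, p.2] P5 ∈ ({-2, 6, -3} : Set ℂ) := by
  obtain ⟨r, hr⟩ : ∃ r : ℂ, r ^ 2 = r + 1 := by
    obtain ⟨d, hd⟩ := IsAlgClosed.exists_pow_nat_eq (5 : ℂ) two_pos
    exact ⟨(1 + d) / 2, by linear_combination hd / 4⟩
  have key : ∀ q, IsCriticalPoint q →
      (q ∈ critNegTwo r ∧ eval ![q.1, q.2] P5 = -2) ∨ (q ∈ critSix r ∧ eval ![q.1, q.2] P5 = 6) ∨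
      (q ∈ critNegThree r ∧ eval ![q.1, q.2] P5 = -3) := fun q hq =>
    (mem_of_isCriticalPoint hr hq).imp (fun h => ⟨h, (critNegTwo_spec hr h).2⟩)
      (Or.imp (fun h => ⟨h, (critSix_spec hr h).2⟩) fun h => ⟨h, (critNegThree_spec hr h).2⟩)
  refine ⟨?_, ?_, ?_, ?_⟩
  · rw [← ncard_critNegTwo hr]
    congr 1
    ext q
    refine ⟨fun ⟨h1, h2⟩ => ?_, critNegTwo_spec hr⟩
    rcases key q h1 with h | h | h
    · exact h.1
    · norm_num [h2] at h
    · norm_num [h2] at h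
  · rw [← ncard_critSix hr]
    congr 1
    ext q
    refine ⟨fun ⟨h1, h2⟩ => ?_, critSix_spec hr⟩
    rcases key q h1 with h | h | h
    · norm_num [h2] at h
    · exact h.1
    · norm_num [h2] at h
  · rw [← ncard_critNegThree hr]
    congr 1
    ext q
    refine ⟨fun ⟨h1, h2⟩ => ?_, critNegThree_spec hr⟩
    rcases key q h1 with h | h | h
    · norm_num [h2] at h
    · norm_num [h2] at h
    · exact h.1
  · intro q hq
    rcases key q hq with h | h | h <;> simp [h.2]
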